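/- Let p be a prime and let L be a complete nonarchimedean normed field which is a normed ℚ_p-algebra. Let W be a finite-dimensional L-vector space equipped with a nonarchimedean norm compatible with that of L, and let N : W → W be an L-linear map. Let m ≥ 1 and let ξ_1, …, ξ_{n₀} ∈ ℤ_p be such that ∏_{k=1}^{n₀}(N − ξ_k)^m = 0 on W, every difference ξ_k − ξ_{k'} is p-adically non-Liouville, and every difference is either 0 or not a rational integer. Let Q ∈ ℚ_p[x] be a polynomial with Q(N)(W) contained in the kernel of N − ξ_1. Let 0 < d < b ≤ c < e < 1 be real numbers and let (v_j)_{j∈ℤ} be a family in W with sup_{j∈ℤ} ‖v_j‖·max(d^j, e^j) < ∞. For j ∈ ℤ and l ∈ ℕ set D_l^{(j)} := Q(N + j) ∘ ∏_{k=1}^{n₀} ∏_{i=1}^{l} [ ((i − (ξ_1 − ξ_k))·(i + (ξ_1 − ξ_k)))^{−1} · (i − (N + j − ξ_k)) ∘ (i + (N + j − ξ_k)) ]^m. Then D_l^{(0)}(v_0) = Q(N)(v_0) for every l, and lim_{l→∞} sup_{j∈ℤ, j≠0} ‖D_l^{(j)}(v_j)‖·max(b^j, c^j) = 0. -/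

import Mathlib

open Polynomial

/-- `a ∈ ℤ_p` is `p`-adically non-Liouville: for every `δ > 1` there is `C > 0` with
`‖a + s‖⁻¹ ≤ C δ^{|s|}` for every integer `s` with `a + s ≠ 0`. -/
def IsPAdicNonLiouville {p : ℕ} [Fact p.Prime] (a : ℤ_[p]) : Prop :=
  ∀ δ : ℝ, 1 < δ → ∃ C : ℝ, 0 < C ∧
    ∀ s : ℤ, (a : ℚ_[p]) + (s : ℚ_[p]) ≠ 0 → ‖(a : ℚ_[p]) + (s : ℚ_[p])‖⁻¹ ≤ C * δ ^ s.natAbs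

/-- The polynomial over `L` whose evaluation at `N` is the operator
`D_l^{(j)} = Q(N + j) ∘ ∏_{k=1}^{n₀} ∏_{i=1}^{l}
[((i - (ξ_1 - ξ_k))(i + (ξ_1 - ξ_k)))⁻¹ (i - (N + j - ξ_k))(i + (N + j - ξ_k))]^m`
(with `ξ_1 = ξ 0`, and `ℤ_p`-scalars acting through `ℚ_p → L`), from the proof of
Lemma 3.4.1. -/
noncomputable def DjlPolyL (p : ℕ) [Fact p.Prime] (L : Type*) [Field L]
    [Algebra ℚ_[p] L] (n₀ : ℕ) (hn₀ : 0 < n₀) (ξ : Fin n₀ → ℤ_[p]) (m : ℕ)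
    (Q : Polynomial ℚ_[p]) (j : ℤ) (l : ℕ) : Polynomial L :=
  (Q.map (algebraMap ℚ_[p] L)).comp (Polynomial.X + Polynomial.C (j : L)) *
    ∏ k : Fin n₀, ∏ i ∈ Finset.Icc 1 l,
      (Polynomial.C ((((i : L) - algebraMap ℚ_[p] L ((ξ ⟨0, hn₀⟩ : ℚ_[p]) - (ξ k : ℚ_[p]))) *
            ((i : L) + algebraMap ℚ_[p] L ((ξ ⟨0, hn₀⟩ : ℚ_[p]) - (ξ k : ℚ_[p]))))⁻¹) *
        ((Polynomial.C (i : L) -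
            (Polynomial.X + Polynomial.C ((j : L) - algebraMap ℚ_[p] L (ξ k : ℚ_[p])))) *
          (Polynomial.C (i : L) +
            (Polynomial.X + Polynomial.C ((j : L) - algebraMap ℚ_[p] L (ξ k : ℚ_[p])))))) ^ m

/-!
Put `a_k = ξ_1 - ξ_k` and `b = j - ξ_k`. The factor `∏_{i ≤ l} (i² - (N + b)²) / (i² - a_k²)` of
`D_l^{(j)}` is, up to sign, the product of `choose (N + b - 1) l`, `choose (N + b + l) l` and
`l! / ∏_{i ≤ l} (i ± a_k)`. Since `N` satisfies a polynomial with roots in `ℤ_p`, Vandermonde's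
identity bounds the binomial coefficients polynomially in `l`, uniformly in `j`. Partial fractions
bound `l! / ∏_{i ≤ l} (i ± a_k)` by the largest `|i ± a_k|⁻¹`, which is subexponential by the
non-Liouville hypothesis. So `D_l^{(j)}` grows subexponentially in `l`, uniformly in `j`. For
`0 < |j| ≤ l` it vanishes, being divisible by the annihilating polynomial of `N`; for `|j| > l` the
passage from radii `[d, e]` to `[b, c]` gains `r ^ |j| ≤ r ^ l` with `r < 1`. At `j = 0` every
factor takes the value `1` at the eigenvalue `ξ_1`, and `Q(N) v_0` is an eigenvector for it.
-/

section

open Filter Finset Topology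
open scoped Nat

section Growth

variable {ι E 𝕜 A : Type*}

/-- Subexponential growth in `l`, uniformly in the index `j`: for every `δ > 1` the norms are
`O(δ ^ l)`. Uniformity in `j` is what makes the bounds on `D_l^{(j)}` usable for all `|j| > l`. -/
def IsSubexponential [Norm E] (F : ι → ℕ → E) : Prop :=
  ∀ δ : ℝ, 1 < δ → ∃ C : ℝ, ∀ j l, ‖F j l‖ ≤ C * δ ^ l

theorem isSubexponential_of_bounded [SeminormedAddGroup E] {F : ι → ℕ → E} {M : ℝ}
    (hF : ∀ j l, ‖F j l‖ ≤ M) : IsSubexponential F := fun _ hδ =>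
  ⟨M, fun j l => (hF j l).trans <|
    le_mul_of_one_le_right ((norm_nonneg _).trans (hF j l)) (one_le_pow₀ hδ.le)⟩

theorem isSubexponential_natCast_add_one : IsSubexponential fun (_ : ι) (l : ℕ) => (l : ℝ) + 1 := by
  intro δ hδ
  refine ⟨max 1 (δ - 1)⁻¹, fun _ l => ?_⟩
  have hδ' : 0 < δ - 1 := sub_pos.2 hδ
  have bernoulli : 1 + l * (δ - 1) ≤ δ ^ l := by
    simpa using one_add_mul_le_pow (show -2 ≤ δ - 1 by linarith) l
  rw [Real.norm_of_nonneg (by positivity)]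
  calc (l : ℝ) + 1 = 1 + (δ - 1)⁻¹ * (l * (δ - 1)) := by field_simp; ring
    _ ≤ max 1 (δ - 1)⁻¹ + max 1 (δ - 1)⁻¹ * (l * (δ - 1)) := by
      gcongr
      · exact le_max_left _ _
      · exact le_max_right _ _
    _ = max 1 (δ - 1)⁻¹ * (1 + l * (δ - 1)) := by ring
    _ ≤ max 1 (δ - 1)⁻¹ * δ ^ l := by gcongr

namespace IsSubexponential

theorem of_norm_le {E' : Type*} [Norm E] [Norm E'] {F : ι → ℕ → E} {G : ι → ℕ → E'}
    (hG : IsSubexponential G) (h : ∀ j l, ‖F j l‖ ≤ ‖G j l‖) : IsSubexponential F :=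
  fun _ hδ => (hG _ hδ).imp fun _ hC j l => (h j l).trans (hC j l)

theorem smul [SeminormedRing A] [SeminormedAddCommGroup E] [Module A E] [IsBoundedSMul A E]
    {F : ι → ℕ → A} {G : ι → ℕ → E} (hF : IsSubexponential F) (hG : IsSubexponential G) :
    IsSubexponential fun j l => F j l • G j l := by
  intro δ hδ
  have hsqrt : 1 < √δ := Real.lt_sqrt_of_sq_lt (by simpa using hδ)
  obtain ⟨C, hC⟩ := hF _ hsqrt
  obtain ⟨C', hC'⟩ := hG _ hsqrt
  refine ⟨C * C', fun j l => ?_⟩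
  calc ‖F j l • G j l‖ ≤ ‖F j l‖ * ‖G j l‖ := norm_smul_le _ _
    _ ≤ C * √δ ^ l * (C' * √δ ^ l) :=
      mul_le_mul (hC j l) (hC' j l) (norm_nonneg _) ((norm_nonneg _).trans (hC j l))
    _ = C * C' * (√δ * √δ) ^ l := by rw [mul_pow]; ring
    _ = C * C' * δ ^ l := by rw [Real.mul_self_sqrt (zero_le_one.trans hδ.le)]

theorem mul [SeminormedRing A] {F G : ι → ℕ → A} (hF : IsSubexponential F)
    (hG : IsSubexponential G) : IsSubexponential fun j l => F j l * G j l :=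
  hF.smul hG

theorem pow [SeminormedRing A] {F : ι → ℕ → A} (hF : IsSubexponential F) (n : ℕ) :
    IsSubexponential fun j l => F j l ^ n := by
  induction n with
  | zero => exact isSubexponential_of_bounded (M := ‖(1 : A)‖) fun j l => by rw [pow_zero]
  | succ n ih => simpa only [pow_succ] using ih.mul hF

/-- The factors live in a commutative monoid `M` mapping to `A` (below, polynomials evaluated at an
operator), because products over a `Finset` are not available in `A` itself. -/
theorem map_prod {M G κ : Type*} [CommMonoid M] [SeminormedRing A] [FunLike G M A]
    [MonoidHomClass G M A] (f : G) (s : Finset κ) {F : κ → ι → ℕ → M}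
    (hF : ∀ k ∈ s, IsSubexponential fun j l => f (F k j l)) :
    IsSubexponential fun j l => f (∏ k ∈ s, F k j l) := by
  classical
  induction s using Finset.induction_on with
  | empty =>
    exact isSubexponential_of_bounded (M := ‖(1 : A)‖) fun j l => by rw [prod_empty, map_one]
  | insert k s hk ih =>
    simp only [prod_insert hk, map_mul]
    exact (hF k (mem_insert_self k s)).mul (ih fun i hi => hF i (mem_insert_of_mem hi))

theorem exists_tendsto_zero_norm_mul_pow_le [Norm E] {F : ι → ℕ → E} (hF : IsSubexponential F)
    {r : ℝ} (hr₀ : 0 < r) (hr₁ : r < 1) :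
    ∃ g : ℕ → ℝ, Tendsto g atTop (𝓝 0) ∧ ∀ j l, ‖F j l‖ * r ^ l ≤ g l := by
  obtain ⟨δ, hδ, hδr⟩ := exists_between ((one_lt_inv₀ hr₀).2 hr₁)
  obtain ⟨C, hC⟩ := hF δ hδ
  have hδr₁ : δ * r < 1 := by simpa [hr₀.ne'] using mul_lt_mul_of_pos_right hδr hr₀
  refine ⟨fun l => C * (δ * r) ^ l, ?_, fun j l => ?_⟩
  · simpa using (tendsto_pow_atTop_nhds_zero_of_lt_one
      (mul_nonneg (zero_le_one.trans hδ.le) hr₀.le) hδr₁).const_mul C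
  · calc ‖F j l‖ * r ^ l ≤ C * δ ^ l * r ^ l := by gcongr; exact hC j l
      _ = C * (δ * r) ^ l := by rw [mul_pow, mul_assoc]

theorem tendstoUniformlyOn_norm_apply_mul {V V' : Type*} [NontriviallyNormedField 𝕜]
    [SeminormedAddCommGroup V] [NormedSpace 𝕜 V] [SeminormedAddCommGroup V'] [NormedSpace 𝕜 V']
    {F : ℤ → ℕ → V →L[𝕜] V'} (hF : IsSubexponential F)
    (hF₀ : ∀ j l, j ≠ 0 → j.natAbs ≤ l → F j l = 0)
    {r : ℝ} (hr₀ : 0 < r) (hr₁ : r < 1) {u w : ℤ → ℝ} (hu : ∀ j, 0 ≤ u j)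
    (huw : ∀ j, u j ≤ r ^ j.natAbs * w j) {v : ℤ → V} {B : ℝ} (hv : ∀ j, ‖v j‖ * w j ≤ B) :
    TendstoUniformlyOn (fun l j => ‖F j l (v j)‖ * u j) 0 atTop {0}ᶜ := by
  obtain ⟨g, hg, hFg⟩ := hF.exists_tendsto_zero_norm_mul_pow_le hr₀ hr₁
  rw [SeminormedAddGroup.tendstoUniformlyOn_zero]
  intro ε hε
  have hgB : Tendsto (fun l => g l * |B|) atTop (𝓝 0) := by simpa using hg.mul_const |B|
  filter_upwards [hgB.eventually_lt_const hε] with l hl j hj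
  rw [Real.norm_of_nonneg (mul_nonneg (norm_nonneg _) (hu j))]
  rcases le_or_gt j.natAbs l with hjl | hlj
  · simpa [hF₀ j l hj hjl] using hε
  calc ‖F j l (v j)‖ * u j ≤ ‖F j l‖ * ‖v j‖ * (r ^ j.natAbs * w j) :=
        mul_le_mul ((F j l).le_opNorm _) (huw j) (hu j) (by positivity)
    _ = ‖F j l‖ * r ^ j.natAbs * (‖v j‖ * w j) := by ring
    _ ≤ ‖F j l‖ * r ^ j.natAbs * |B| := by
        gcongr; exact (hv j).trans (le_abs_self B)
    _ ≤ ‖F j l‖ * r ^ l * |B| := by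
        gcongr ‖F j l‖ * ?_ * |B|
        exact pow_le_pow_of_le_one hr₀.le hr₁.le hlj.le
    _ ≤ g l * |B| := by gcongr; exact hFg j l
    _ < ε := hl

end IsSubexponential

end Growth

section Weights

theorem zpow_le_pow_natAbs_mul_max {d t e r : ℝ} (hd : 0 < d) (ht : 0 < t) (he : 0 < e)
    (hte : t ≤ r * e) (hdt : d ≤ r * t) (j : ℤ) :
    t ^ j ≤ r ^ j.natAbs * max (d ^ j) (e ^ j) := by
  have hr : 0 < r := pos_of_mul_pos_left (ht.trans_le hte) he.le
  obtain ⟨n, rfl | rfl⟩ := Int.eq_nat_or_neg j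
  · simp only [zpow_natCast, Int.natAbs_natCast]
    calc t ^ n ≤ (r * e) ^ n := by gcongr
      _ = r ^ n * e ^ n := mul_pow r e n
      _ ≤ r ^ n * max (d ^ n) (e ^ n) := by gcongr; exact le_max_right _ _
  · simp only [zpow_neg, zpow_natCast, Int.natAbs_neg, Int.natAbs_natCast]
    calc (t ^ n)⁻¹ ≤ r ^ n * (d ^ n)⁻¹ := by
          rw [inv_le_iff_one_le_mul₀ (by positivity), mul_right_comm, ← mul_pow, ← div_eq_mul_inv,
            one_le_div (by positivity)]
          gcongr
      _ ≤ r ^ n * max (d ^ n)⁻¹ (e ^ n)⁻¹ := by gcongr; exact le_max_left _ _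

theorem exists_max_zpow_le_pow_natAbs_mul_max {d b c e : ℝ} (hd : 0 < d) (hdb : d < b)
    (hbc : b ≤ c) (hce : c < e) :
    ∃ r : ℝ, 0 < r ∧ r < 1 ∧
      ∀ j : ℤ, max (b ^ j) (c ^ j) ≤ r ^ j.natAbs * max (d ^ j) (e ^ j) := by
  have hb : 0 < b := hd.trans hdb
  have hc : 0 < c := hb.trans_le hbc
  have he : 0 < e := hc.trans hce
  have hr : 0 < max (c / e) (d / b) := lt_max_of_lt_left (div_pos hc he)
  have hcr : c ≤ max (c / e) (d / b) * e := (div_le_iff₀ he).1 (le_max_left _ _)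
  have hdr : d ≤ max (c / e) (d / b) * b := (div_le_iff₀ hb).1 (le_max_right _ _)
  refine ⟨max (c / e) (d / b), hr, max_lt ((div_lt_one he).2 hce) ((div_lt_one hb).2 hdb),
    fun j => max_le ?_ ?_⟩
  · exact zpow_le_pow_natAbs_mul_max hd hb he (hbc.trans hcr) hdr j
  · exact zpow_le_pow_natAbs_mul_max hd hc he hcr (hdr.trans (by gcongr)) j

end Weights

section BinomialPolynomials

variable {R : Type*} [CommRing R] [BinomialRing R]

theorem factorial_mul_choose_eq_prod_range (r : R) (n : ℕ) :
    (n ! : R) * Ring.choose r n = ∏ i ∈ range n, (r - i) := by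
  rw [← nsmul_eq_mul, ← Ring.descPochhammer_eq_factorial_smul_choose,
    ← descPochhammer_eval_eq_prod_range, ← aeval_eq_smeval, aeval_def, eval₂_eq_eval_map,
    algebraMap_int_eq, descPochhammer_map]

theorem prod_Icc_natCast_sub_eq_factorial_mul_choose (r : R) (n : ℕ) :
    ∏ i ∈ Icc 1 n, ((i : R) - r) = (-1) ^ n * (n ! * Ring.choose (r - 1) n) := by
  calc ∏ i ∈ Icc 1 n, ((i : R) - r) = ∏ i ∈ range n, (((1 + i : ℕ) : R) - r) := by
        rw [← Ico_add_one_right_eq_Icc, prod_Ico_eq_prod_range, Nat.add_sub_cancel]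
    _ = ∏ i ∈ range n, -(r - 1 - i) := prod_congr rfl fun i _ => by push_cast; ring
    _ = (-1) ^ n * (n ! * Ring.choose (r - 1) n) := by
        rw [prod_neg, card_range, factorial_mul_choose_eq_prod_range]

theorem prod_Icc_natCast_add_eq_factorial_mul_choose (r : R) (n : ℕ) :
    ∏ i ∈ Icc 1 n, ((i : R) + r) = n ! * Ring.choose (r + n) n := by
  rw [factorial_mul_choose_eq_prod_range, ← prod_range_reflect, ← Ico_add_one_right_eq_Icc,
    prod_Ico_eq_prod_range, Nat.add_sub_cancel]
  refine prod_congr rfl fun i hi => ?_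
  have hreflect : n - (n - 1 - i) = 1 + i := by have := mem_range.1 hi; lia
  rw [add_sub_assoc, ← Nat.cast_sub (by lia), hreflect, add_comm]

theorem natCast_add_one_mul_choose_succ (r : R) (n : ℕ) :
    ((n : R) + 1) * Ring.choose r (n + 1) = r * Ring.choose (r - 1) n := by
  simpa using Ring.choose_smul_choose r (Nat.le_add_left 1 n)

end BinomialPolynomials

section FactorialQuotients

/-- Partial fractions: with `f n a = n! / ∏ i ∈ range (n + 1), (a + i)` one has
`f (n + 1) a = f n a - f n (a + 1)`. -/
theorem norm_factorial_div_prod_range_le {𝕜 : Type*} [NormedField 𝕜] [IsUltrametricDist 𝕜]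
    {K : ℝ} (n : ℕ) (a : 𝕜) (h : ∀ i ≤ n, ‖a + i‖⁻¹ ≤ K) :
    ‖(n ! : 𝕜) / ∏ i ∈ range (n + 1), (a + i)‖ ≤ K := by
  induction n generalizing a with
  | zero => simpa using h 0 le_rfl
  | succ n ih =>
    by_cases hzero : ∏ i ∈ range (n + 2), (a + (i : 𝕜)) = 0
    · simpa [hzero] using (inv_nonneg.2 (norm_nonneg _)).trans (h 0 (Nat.zero_le _))
    have hlast : ∏ i ∈ range (n + 2), (a + (i : 𝕜)) =
        (∏ i ∈ range (n + 1), (a + (i : 𝕜))) * (a + (n + 1 : ℕ)) := prod_range_succ _ _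
    have hfirst : ∏ i ∈ range (n + 2), (a + (i : 𝕜)) =
        (∏ i ∈ range (n + 1), (a + 1 + (i : 𝕜))) * a := by
      rw [prod_range_succ', Nat.cast_zero, add_zero]
      exact congrArg (· * a) (prod_congr rfl fun i _ => by push_cast; ring)
    have hpartial : ((n + 1)! : 𝕜) / ∏ i ∈ range (n + 2), (a + (i : 𝕜)) =
        (n ! : 𝕜) / ∏ i ∈ range (n + 1), (a + (i : 𝕜)) -
          (n ! : 𝕜) / ∏ i ∈ range (n + 1), (a + 1 + (i : 𝕜)) := by
      rw [← mul_div_mul_right (n ! : 𝕜) _ (right_ne_zero_of_mul (hlast ▸ hzero)), ← hlast,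
        ← mul_div_mul_right (n ! : 𝕜) _ (right_ne_zero_of_mul (hfirst ▸ hzero)), ← hfirst,
        ← sub_div, Nat.factorial_succ]
      push_cast
      ring
    rw [hpartial, sub_eq_add_neg]
    refine (IsUltrametricDist.norm_add_le_max _ _).trans (max_le ?_ ?_)
    · exact ih a fun i hi => h i (hi.trans n.le_succ)
    · rw [norm_neg]
      refine ih (a + 1) fun i hi => ?_
      simpa [add_assoc, add_comm (1 : 𝕜)] using h (i + 1) (Nat.succ_le_succ hi)

variable {p : ℕ} [Fact p.Prime]

theorem IsPAdicNonLiouville.neg {a : ℤ_[p]} (ha : IsPAdicNonLiouville a) :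
    IsPAdicNonLiouville (-a) := by
  intro δ hδ
  obtain ⟨C, hC, h⟩ := ha δ hδ
  refine ⟨C, hC, fun s hs => ?_⟩
  have hnorm : ((-a : ℤ_[p]) : ℚ_[p]) + s = -((a : ℚ_[p]) + (-s : ℤ)) := by push_cast; ring
  rw [hnorm, neg_ne_zero] at hs
  simpa only [hnorm, norm_neg, Int.natAbs_neg] using h (-s) hs

theorem IsPAdicNonLiouville.isSubexponential_factorial_div {ι : Type*} {a : ℤ_[p]}
    (ha : IsPAdicNonLiouville a) :
    IsSubexponential fun (_ : ι) (l : ℕ) => (l ! : ℚ_[p]) / ∏ i ∈ Icc 1 l, ((i : ℚ_[p]) + a) := by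
  intro δ hδ
  obtain ⟨C, hC, h⟩ := ha δ hδ
  have hinv (i l : ℕ) (hi : i ≤ l) : ‖(a : ℚ_[p]) + i‖⁻¹ ≤ C * δ ^ l := by
    by_cases hzero : (a : ℚ_[p]) + i = 0
    · simp only [hzero, norm_zero, inv_zero]
      positivity
    · have hnl := h i (by simpa using hzero)
      simp only [Int.cast_natCast, Int.natAbs_natCast] at hnl
      exact hnl.trans (by gcongr; exact hδ.le)
  refine ⟨max 1 C, fun _ l => ?_⟩
  cases l with
  | zero => simp
  | succ n =>
    have hprod : ∏ i ∈ Icc 1 (n + 1), ((i : ℚ_[p]) + a) =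
        ∏ i ∈ range (n + 1), ((a : ℚ_[p]) + 1 + i) := by
      rw [← Ico_add_one_right_eq_Icc, prod_Ico_eq_prod_range]
      exact prod_congr rfl fun i _ => by push_cast; ring
    beta_reduce
    rw [hprod, Nat.factorial_succ, Nat.cast_mul, mul_div_assoc, norm_mul]
    refine (mul_le_of_le_one_left (norm_nonneg _) (IsUltrametricDist.norm_natCast_le_one _ _)).trans
      ((norm_factorial_div_prod_range_le n _ fun i hi => ?_).trans
        (mul_le_mul_of_nonneg_right (le_max_right 1 C) (by positivity)))
    simpa [add_assoc, add_comm (1 : ℚ_[p])] using hinv (i + 1) (n + 1) (Nat.succ_le_succ hi)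

end FactorialQuotients

section BinomialGrowth

variable {p : ℕ} [Fact p.Prime] {A : Type*} [SeminormedRing A] [NormedAlgebra ℚ_[p] A]

theorem norm_choose_coe_le_one (a : ℤ_[p]) (n : ℕ) : ‖Ring.choose (a : ℚ_[p]) n‖ ≤ 1 := by
  have hcoe : ((Ring.choose a n : ℤ_[p]) : ℚ_[p]) = Ring.choose (a : ℚ_[p]) n :=
    Ring.map_choose PadicInt.Coe.ringHom a n
  exact hcoe ▸ (Ring.choose a n).2

theorem norm_natCast_add_one_inv_le (n : ℕ) : ‖((n : ℚ_[p]) + 1)‖⁻¹ ≤ (n : ℝ) + 1 := by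
  have hval := Padic.norm_eq_zpow_neg_valuation (p := p) (x := ((n + 1 : ℕ) : ℚ_[p]))
    (Nat.cast_ne_zero.2 n.succ_ne_zero)
  have hle : p ^ padicValNat p (n + 1) ≤ n + 1 := Nat.le_of_dvd n.succ_pos pow_padicValNat_dvd
  rw [Padic.valuation_natCast, zpow_neg, zpow_natCast, Nat.cast_succ] at hval
  rw [hval, inv_inv]
  exact_mod_cast hle

theorem norm_aeval_C_mul_le (x : A) (c : ℚ_[p]) (F : ℚ_[p][X]) :
    ‖aeval x (C c * F)‖ ≤ ‖c‖ * ‖aeval x F‖ := by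
  rw [map_mul, aeval_C, ← Algebra.smul_def]
  exact norm_smul_le _ _

theorem norm_aeval_choose_add_C_mul_le_sum (x : A) (P F : ℚ_[p][X]) (b : ℤ_[p]) (n : ℕ) :
    ‖aeval x (Ring.choose (P + C (b : ℚ_[p])) n * F)‖ ≤
      ∑ u ∈ range (n + 1), ‖aeval x (Ring.choose P u * F)‖ := by
  rw [Ring.add_choose_eq n (Commute.all _ _),
    Nat.sum_antidiagonal_eq_sum_range_succ fun i j => Ring.choose P i * Ring.choose (C _) j,
    sum_mul, map_sum]
  refine (norm_sum_le _ _).trans (sum_le_sum fun u _ => ?_)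
  rw [← Ring.map_choose C, mul_comm (Ring.choose P u), mul_assoc]
  exact (norm_aeval_C_mul_le x _ _).trans
    (mul_le_of_le_one_left (norm_nonneg _) (norm_choose_coe_le_one b _))

theorem norm_aeval_choose_succ_mul_le (x : A) (P F : ℚ_[p][X]) (n : ℕ) :
    ‖aeval x (Ring.choose P (n + 1) * F)‖ ≤
      (n + 1) * ‖aeval x (Ring.choose (P - 1) n * (P * F))‖ := by
  have hne : (n : ℚ_[p]) + 1 ≠ 0 := n.cast_add_one_ne_zero
  have habsorb : Ring.choose P (n + 1) * F =
      C ((n : ℚ_[p]) + 1)⁻¹ * (Ring.choose (P - 1) n * (P * F)) := by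
    have hC : C ((n : ℚ_[p]) + 1)⁻¹ * ((n : ℚ_[p][X]) + 1) = 1 := by
      rw [← C_eq_natCast, ← C_1, ← C_add, ← C_mul, inv_mul_cancel₀ hne]
    linear_combination (-(Ring.choose P (n + 1) * F)) * hC +
      C ((n : ℚ_[p]) + 1)⁻¹ * F * natCast_add_one_mul_choose_succ P n
  rw [habsorb]
  refine (norm_aeval_C_mul_le x _ _).trans (mul_le_mul_of_nonneg_right ?_ (norm_nonneg _))
  exact (norm_inv _).trans_le (norm_natCast_add_one_inv_le n)

/-- Vandermonde reduces `choose (X + a) n` to `choose (X - ξ) u` with `u ≤ n`, and absorption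
`(u + 1) choose (X - ξ) (u + 1) = (X - ξ) choose (X - ξ - 1) u` brings out the factor `X - ξ` at
the cost of `|u + 1|⁻¹ ≤ u + 1`. -/
theorem norm_aeval_choose_mul_le_of_X_sub_C_mul (x : A) (F : ℚ_[p][X]) (ξ : ℤ_[p]) {B : ℝ} {k : ℕ}
    (hB : ∀ (a : ℤ_[p]) (n : ℕ),
      ‖aeval x (Ring.choose (X + C (a : ℚ_[p])) n * ((X - C (ξ : ℚ_[p])) * F))‖ ≤ B * (n + 1) ^ k)
    (a : ℤ_[p]) (n : ℕ) :
    ‖aeval x (Ring.choose (X + C (a : ℚ_[p])) n * F)‖ ≤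
      (‖aeval x F‖ + B) * (n + 1) ^ (k + 2) := by
  have hB₀ : 0 ≤ B := by simpa using (norm_nonneg _).trans (hB 0 0)
  set P : ℚ_[p][X] := X - C (ξ : ℚ_[p]) with hP
  have hpred : P - 1 = X + C ((-ξ - 1 : ℤ_[p]) : ℚ_[p]) := by
    rw [hP]; push_cast; rw [C_sub, C_neg, C_1]; ring
  have hadd : X + C (a : ℚ_[p]) = P + C ((ξ + a : ℤ_[p]) : ℚ_[p]) := by
    rw [hP]; push_cast; rw [C_add]; ring
  have hterm (u : ℕ) (hu : u ≤ n) :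
      ‖aeval x (Ring.choose P u * F)‖ ≤ (‖aeval x F‖ + B) * ((n : ℝ) + 1) ^ (k + 1) := by
    cases u with
    | zero =>
      rw [Ring.choose_zero_right, one_mul]
      exact (le_add_of_nonneg_right hB₀).trans
        (le_mul_of_one_le_right (by positivity) (one_le_pow₀ (by simp)))
    | succ u =>
      calc ‖aeval x (Ring.choose P (u + 1) * F)‖
          ≤ (u + 1) * ‖aeval x (Ring.choose (P - 1) u * (P * F))‖ :=
            norm_aeval_choose_succ_mul_le x P F u
        _ ≤ (u + 1) * (B * (u + 1) ^ k) := by gcongr; exact hpred ▸ hB (-ξ - 1) u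
        _ = B * ((u : ℝ) + 1) ^ (k + 1) := by ring
        _ ≤ (‖aeval x F‖ + B) * ((n : ℝ) + 1) ^ (k + 1) := by
            gcongr
            · exact le_add_of_nonneg_left (norm_nonneg _)
            · lia
  calc ‖aeval x (Ring.choose (X + C (a : ℚ_[p])) n * F)‖
      ≤ ∑ u ∈ range (n + 1), ‖aeval x (Ring.choose P u * F)‖ :=
        hadd ▸ norm_aeval_choose_add_C_mul_le_sum x P F (ξ + a) n
    _ ≤ ∑ _u ∈ range (n + 1), (‖aeval x F‖ + B) * ((n : ℝ) + 1) ^ (k + 1) :=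
        sum_le_sum fun u hu => hterm u (Nat.le_of_lt_succ (mem_range.1 hu))
    _ = (‖aeval x F‖ + B) * ((n : ℝ) + 1) ^ (k + 2) := by
        rw [sum_const, card_range, nsmul_eq_mul]; push_cast; ring

theorem exists_norm_aeval_choose_mul_le_of_prod_X_sub_C_mul (x : A) (T : Multiset ℤ_[p])
    (F : ℚ_[p][X]) (hF : aeval x ((T.map fun ξ : ℤ_[p] => X - C (ξ : ℚ_[p])).prod * F) = 0) :
    ∃ B : ℝ, ∀ (a : ℤ_[p]) (n : ℕ),
      ‖aeval x (Ring.choose (X + C (a : ℚ_[p])) n * F)‖ ≤ B * (n + 1) ^ (2 * T.card) := by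
  induction T using Multiset.induction_on generalizing F with
  | empty =>
    refine ⟨0, fun a n => ?_⟩
    rw [Multiset.map_zero, Multiset.prod_zero, one_mul] at hF
    rw [map_mul, hF, mul_zero, norm_zero, zero_mul]
  | cons ξ T ih =>
    obtain ⟨B, hB⟩ := ih ((X - C (ξ : ℚ_[p])) * F) (by
      rwa [Multiset.map_cons, Multiset.prod_cons, mul_right_comm, mul_comm] at hF)
    refine ⟨‖aeval x F‖ + B, fun a n => ?_⟩
    rw [Multiset.card_cons]
    exact norm_aeval_choose_mul_le_of_X_sub_C_mul x F ξ hB a n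

theorem isSubexponential_aeval_choose_X_add_C {ι : Type*} (x : A) (T : Multiset ℤ_[p])
    (hT : aeval x (T.map fun ξ : ℤ_[p] => X - C (ξ : ℚ_[p])).prod = 0) (a : ι → ℕ → ℤ_[p]) :
    IsSubexponential fun j l => aeval x (Ring.choose (X + C (a j l : ℚ_[p])) l) := by
  obtain ⟨B, hB⟩ :=
    exists_norm_aeval_choose_mul_le_of_prod_X_sub_C_mul x T 1 (by rwa [mul_one])
  have hpoly : IsSubexponential fun (_ : ι) (l : ℕ) => |B| * ((l : ℝ) + 1) ^ (2 * T.card) :=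
    (isSubexponential_of_bounded fun _ _ => (norm_norm B).le).mul
      (isSubexponential_natCast_add_one.pow _)
  refine hpoly.of_norm_le fun j l => ?_
  rw [Real.norm_of_nonneg (by positivity)]
  calc _ ≤ B * ((l : ℝ) + 1) ^ (2 * T.card) := by simpa only [mul_one] using hB (a j l) l
    _ ≤ |B| * ((l : ℝ) + 1) ^ (2 * T.card) := by gcongr; exact le_abs_self B

end BinomialGrowth

section EulerSineQuotient

variable {K : Type*} [Field K]

/-- The quotient `∏ i ∈ Icc 1 l, (i² - (X + b)²) / (i² - a²)` of partial Euler products for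
`sin (π (X + b)) / (X + b)` and `sin (π a) / a`; the operators `D_l^{(j)}` are products of values
of such polynomials. Since `0⁻¹ = 0`, the factors with `a = ± i` are zero. -/
noncomputable def eulerSineQuotient (a b : K) (l : ℕ) : K[X] :=
  ∏ i ∈ Icc 1 l, C (((i - a) * (i + a))⁻¹) * ((C (i : K) - (X + C b)) * (C (i : K) + (X + C b)))

theorem eulerSineQuotient_eq_choose_mul_choose [CharZero K] (a b : K) (l : ℕ) :
    eulerSineQuotient a b l =
      C ((-1) ^ l * (l ! / ∏ i ∈ Icc 1 l, ((i : K) + -a)) * (l ! / ∏ i ∈ Icc 1 l, ((i : K) + a))) *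
        (Ring.choose (X + C (b - 1)) l * Ring.choose (X + C (b + l)) l) := by
  have hpred : X + C b - 1 = X + C (b - 1) := by rw [C_sub, C_1, add_sub_assoc]
  have hadd : X + C b + (l : K[X]) = X + C (b + l) := by rw [C_add, C_eq_natCast, add_assoc]
  simp only [eulerSineQuotient, prod_mul_distrib, ← map_prod, prod_inv_distrib, C_eq_natCast,
    prod_Icc_natCast_sub_eq_factorial_mul_choose (X + C b),
    prod_Icc_natCast_add_eq_factorial_mul_choose (X + C b), ← sub_eq_add_neg, hpred, hadd]
  simp only [← C_eq_natCast, div_eq_mul_inv, mul_inv, C_mul, C_pow, C_neg, C_1]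
  ring

theorem eval_sub_eulerSineQuotient {a : K} (b : K) {l : ℕ}
    (ha : ∀ i ∈ Icc 1 l, ((i : K) - a) * (i + a) ≠ 0) :
    (eulerSineQuotient a b l).eval (a - b) = 1 := by
  rw [eulerSineQuotient, eval_prod]
  refine prod_eq_one fun i hi => ?_
  simp only [eval_mul, eval_C, eval_sub, eval_add, eval_X, sub_add_cancel]
  exact inv_mul_cancel₀ (ha i hi)

theorem X_sub_C_dvd_eulerSineQuotient (a z : K) {j : ℤ} {l : ℕ} (hj : j ≠ 0)
    (hjl : j.natAbs ≤ l) : X - C z ∣ eulerSineQuotient a (j - z) l := by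
  have hmem : j.natAbs ∈ Icc 1 l := mem_Icc.2 ⟨Int.natAbs_pos.2 hj, hjl⟩
  refine Dvd.dvd.trans (Dvd.dvd.mul_left ?_ _) (dvd_prod_of_mem _ hmem)
  obtain ⟨n, rfl | rfl⟩ := Int.eq_nat_or_neg j
  · refine Dvd.dvd.mul_right ⟨-1, ?_⟩ _
    simp only [Int.natAbs_natCast, Int.cast_natCast, C_sub]
    ring
  · refine Dvd.dvd.mul_left ⟨1, ?_⟩ _
    simp only [Int.natAbs_neg, Int.natAbs_natCast, Int.cast_neg, Int.cast_natCast, C_sub, C_neg]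
    ring

end EulerSineQuotient

section OperatorPolynomials

theorem exists_norm_aeval_le_of_norm_le {𝕜 A : Type*} [NormedField 𝕜] [SeminormedRing A]
    [NormedAlgebra 𝕜 A] (Q : 𝕜[X]) (r : ℝ) :
    ∃ M : ℝ, ∀ x : A, ‖x‖ ≤ r → ‖aeval x Q‖ ≤ M := by
  induction Q using Polynomial.induction_on with
  | C a => exact ⟨‖algebraMap 𝕜 A a‖, fun x _ => by rw [aeval_C]⟩
  | add F G hF hG =>
    obtain ⟨M, hM⟩ := hF
    obtain ⟨M', hM'⟩ := hG
    exact ⟨M + M', fun x hx => by rw [map_add]; exact norm_add_le_of_le (hM x hx) (hM' x hx)⟩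
  | monomial n a h =>
    obtain ⟨M, hM⟩ := h
    refine ⟨M * r, fun x hx => ?_⟩
    rw [pow_succ, ← mul_assoc, map_mul, aeval_X]
    exact (norm_mul_le _ _).trans
      (mul_le_mul (hM x hx) hx (norm_nonneg _) ((norm_nonneg _).trans (hM x hx)))

variable {p : ℕ} [Fact p.Prime]

theorem exists_norm_aeval_comp_X_add_C_intCast_le {A : Type*} [SeminormedRing A]
    [NormedAlgebra ℚ_[p] A] (x : A) (Q : ℚ_[p][X]) :
    ∃ M : ℝ, ∀ j : ℤ, ‖aeval x (Q.comp (X + C (j : ℚ_[p])))‖ ≤ M := by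
  obtain ⟨M, hM⟩ := exists_norm_aeval_le_of_norm_le (A := A) Q (‖x‖ + ‖(1 : A)‖)
  refine ⟨M, fun j => ?_⟩
  rw [aeval_comp, map_add, aeval_X, aeval_C]
  refine hM _ (norm_add_le_of_le le_rfl ((norm_algebraMap _ _).trans_le ?_))
  exact mul_le_of_le_one_left (norm_nonneg _) (Padic.norm_int_le_one j)

theorem isSubexponential_aeval_eulerSineQuotient {ι A : Type*} [SeminormedRing A]
    [NormedAlgebra ℚ_[p] A] (x : A) (T : Multiset ℤ_[p])
    (hT : aeval x (T.map fun ξ : ℤ_[p] => X - C (ξ : ℚ_[p])).prod = 0) {a : ℤ_[p]}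
    (ha : IsPAdicNonLiouville a) (b : ι → ℤ_[p]) :
    IsSubexponential fun j l => aeval x (eulerSineQuotient (a : ℚ_[p]) (b j) l) := by
  have hconst : IsSubexponential fun (_ : ι) (l : ℕ) => (-1 : ℚ_[p]) ^ l *
      (l ! / ∏ i ∈ Icc 1 l, ((i : ℚ_[p]) + -a)) * (l ! / ∏ i ∈ Icc 1 l, ((i : ℚ_[p]) + a)) := by
    refine .mul (.mul ?_ ?_) ha.isSubexponential_factorial_div
    · exact isSubexponential_of_bounded (M := 1) fun _ l => by simp
    · simpa only [PadicInt.coe_neg] using ha.neg.isSubexponential_factorial_div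
  have hchoose (c : ι → ℕ → ℤ_[p]) := isSubexponential_aeval_choose_X_add_C x T hT c
  have hprod := (hchoose fun j _ => b j - 1).mul (hchoose fun j l => b j + l)
  simpa only [eulerSineQuotient_eq_choose_mul_choose, map_mul, aeval_C, Algebra.smul_def, map_pow,
    map_neg, map_one, PadicInt.coe_sub, PadicInt.coe_add, PadicInt.coe_one, PadicInt.coe_natCast]
    using hconst.smul hprod

theorem natCast_sub_mul_natCast_add_ne_zero {a : ℤ_[p]}
    (ha : a = 0 ∨ ∀ i : ℤ, (a : ℚ_[p]) ≠ i) {i : ℕ} (hi : i ≠ 0) :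
    ((i : ℚ_[p]) - a) * (i + a) ≠ 0 := by
  rcases ha with rfl | ha
  · simpa using hi
  · refine mul_ne_zero (fun h => ha i ?_) (fun h => ha (-i) ?_)
    · simpa using (sub_eq_zero.1 h).symm
    · simpa using eq_neg_of_add_eq_zero_right h

variable {n₀ : ℕ} (hn₀ : 0 < n₀) (ξ : Fin n₀ → ℤ_[p]) (m : ℕ) (Q : ℚ_[p][X])

theorem DjlPolyL_eq_mul_prod_eulerSineQuotient_pow (j : ℤ) (l : ℕ) :
    DjlPolyL p ℚ_[p] n₀ hn₀ ξ m Q j l = Q.comp (X + C (j : ℚ_[p])) *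
      ∏ k, eulerSineQuotient ((ξ ⟨0, hn₀⟩ - ξ k : ℤ_[p]) : ℚ_[p])
        ((j - ξ k : ℤ_[p]) : ℚ_[p]) l ^ m := by
  simp only [DjlPolyL, eulerSineQuotient, prod_pow, Algebra.algebraMap_self, Polynomial.map_id,
    RingHom.id_apply, PadicInt.coe_sub, PadicInt.coe_intCast]

theorem DjlPolyL_map_algebraMap (L : Type*) [Field L] [Algebra ℚ_[p] L] (j : ℤ) (l : ℕ) :
    (DjlPolyL p ℚ_[p] n₀ hn₀ ξ m Q j l).map (algebraMap ℚ_[p] L) =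
      DjlPolyL p L n₀ hn₀ ξ m Q j l := by
  simp [DjlPolyL, Polynomial.map_prod, Polynomial.map_comp]

theorem prod_X_sub_C_pow_dvd_DjlPolyL {j : ℤ} {l : ℕ} (hj : j ≠ 0) (hjl : j.natAbs ≤ l) :
    ∏ k, (X - C (ξ k : ℚ_[p])) ^ m ∣ DjlPolyL p ℚ_[p] n₀ hn₀ ξ m Q j l := by
  rw [DjlPolyL_eq_mul_prod_eulerSineQuotient_pow]
  refine Dvd.dvd.mul_left (prod_dvd_prod_of_dvd _ _ fun k _ => pow_dvd_pow_of_dvd ?_ m) _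
  simpa only [PadicInt.coe_sub, PadicInt.coe_intCast] using
    X_sub_C_dvd_eulerSineQuotient _ (ξ k : ℚ_[p]) hj hjl

theorem X_sub_C_mul_dvd_DjlPolyL_zero_sub
    (hξ : ∀ k, ξ ⟨0, hn₀⟩ - ξ k = 0 ∨
      ∀ i : ℤ, ((ξ ⟨0, hn₀⟩ - ξ k : ℤ_[p]) : ℚ_[p]) ≠ i) (l : ℕ) :
    (X - C (ξ ⟨0, hn₀⟩ : ℚ_[p])) * Q ∣ DjlPolyL p ℚ_[p] n₀ hn₀ ξ m Q 0 l - Q := by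
  rw [DjlPolyL_eq_mul_prod_eulerSineQuotient_pow, Int.cast_zero (R := ℚ_[p]), C_0, add_zero, comp_X]
  set R := ∏ k, eulerSineQuotient ((ξ ⟨0, hn₀⟩ - ξ k : ℤ_[p]) : ℚ_[p])
    (((0 : ℤ) - ξ k : ℤ_[p]) : ℚ_[p]) l ^ m with hR
  have heval : R.eval (ξ ⟨0, hn₀⟩ : ℚ_[p]) = 1 := by
    rw [hR, eval_prod]
    refine prod_eq_one fun k _ => ?_
    have hone := eval_sub_eulerSineQuotient (((0 : ℤ) - ξ k : ℤ_[p]) : ℚ_[p]) (l := l) fun i hi =>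
      natCast_sub_mul_natCast_add_ne_zero (hξ k) (Nat.one_le_iff_ne_zero.1 (mem_Icc.1 hi).1)
    have hpoint : ((ξ ⟨0, hn₀⟩ - ξ k : ℤ_[p]) : ℚ_[p]) - (((0 : ℤ) - ξ k : ℤ_[p]) : ℚ_[p]) =
        ξ ⟨0, hn₀⟩ := by push_cast; ring
    rw [eval_pow, ← hpoint, hone, one_pow]
  have hroot : X - C (ξ ⟨0, hn₀⟩ : ℚ_[p]) ∣ R - 1 :=
    dvd_iff_isRoot.2 (by rw [IsRoot.def, eval_sub, heval, eval_one, sub_self])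
  rw [show Q * R - Q = (R - 1) * Q by ring]
  exact mul_dvd_mul_right hroot Q

theorem aeval_DjlPolyL_zero_smul {A V : Type*} [Ring A] [Algebra ℚ_[p] A] [AddCommGroup V]
    [Module A V] (x : A) {w : V}
    (hξ : ∀ k, ξ ⟨0, hn₀⟩ - ξ k = 0 ∨
      ∀ i : ℤ, ((ξ ⟨0, hn₀⟩ - ξ k : ℤ_[p]) : ℚ_[p]) ≠ i)
    (hw : aeval x ((X - C (ξ ⟨0, hn₀⟩ : ℚ_[p])) * Q) • w = 0) (l : ℕ) :
    aeval x (DjlPolyL p ℚ_[p] n₀ hn₀ ξ m Q 0 l) • w = aeval x Q • w := by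
  obtain ⟨F, hF⟩ := X_sub_C_mul_dvd_DjlPolyL_zero_sub hn₀ ξ m Q hξ l
  rw [← sub_eq_zero, ← sub_smul, ← map_sub, hF, mul_comm, map_mul, mul_smul, hw, smul_zero]

theorem isSubexponential_aeval_DjlPolyL {A : Type*} [SeminormedRing A] [NormedAlgebra ℚ_[p] A]
    {x : A} (hx : aeval x (∏ k, (X - C (ξ k : ℚ_[p])) ^ m) = 0)
    (hξ : ∀ k, IsPAdicNonLiouville (ξ ⟨0, hn₀⟩ - ξ k)) :
    IsSubexponential fun j l => aeval x (DjlPolyL p ℚ_[p] n₀ hn₀ ξ m Q j l) := by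
  have hroots : aeval x ((m • univ.val.map ξ).map fun ζ : ℤ_[p] => X - C (ζ : ℚ_[p])).prod = 0 := by
    rw [Multiset.map_nsmul, Multiset.prod_nsmul, Multiset.map_map, ← hx, prod_pow]
    rfl
  obtain ⟨M, hM⟩ := exists_norm_aeval_comp_X_add_C_intCast_le x Q
  simp only [DjlPolyL_eq_mul_prod_eulerSineQuotient_pow, map_mul]
  refine (isSubexponential_of_bounded fun j _ => hM j).mul (.map_prod (aeval x) _ fun k _ => ?_)
  simp only [map_pow]
  exact (isSubexponential_aeval_eulerSineQuotient x _ hroots (hξ k) _).pow m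

theorem tendstoUniformlyOn_norm_aeval_DjlPolyL_apply_mul {V : Type*} [SeminormedAddCommGroup V]
    [NormedSpace ℚ_[p] V] {T : V →L[ℚ_[p]] V}
    (hT : aeval T (∏ k, (X - C (ξ k : ℚ_[p])) ^ m) = 0)
    (hξ : ∀ k, IsPAdicNonLiouville (ξ ⟨0, hn₀⟩ - ξ k))
    {d b c e : ℝ} (hd : 0 < d) (hdb : d < b) (hbc : b ≤ c) (hce : c < e)
    {v : ℤ → V} {B : ℝ} (hv : ∀ j : ℤ, ‖v j‖ * max (d ^ j) (e ^ j) ≤ B) :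
    TendstoUniformlyOn (fun l j => ‖aeval T (DjlPolyL p ℚ_[p] n₀ hn₀ ξ m Q j l) (v j)‖ *
      max (b ^ j) (c ^ j)) 0 atTop {0}ᶜ := by
  obtain ⟨r, hr₀, hr₁, hr⟩ := exists_max_zpow_le_pow_natAbs_mul_max hd hdb hbc hce
  have hvanish (j : ℤ) (l : ℕ) (hj : j ≠ 0) (hjl : j.natAbs ≤ l) :
      aeval T (DjlPolyL p ℚ_[p] n₀ hn₀ ξ m Q j l) = 0 :=
    aeval_eq_zero_of_dvd_aeval_eq_zero (prod_X_sub_C_pow_dvd_DjlPolyL hn₀ ξ m Q hj hjl) hT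
  have hweight (j : ℤ) : 0 ≤ max (b ^ j) (c ^ j) := le_max_of_le_left (zpow_nonneg (by linarith) j)
  exact (isSubexponential_aeval_DjlPolyL hn₀ ξ m Q hT hξ).tendstoUniformlyOn_norm_apply_mul
    hvanish hr₀ hr₁ hweight hr hv

end OperatorPolynomials

section Operators

theorem aeval_map_algebraMap_apply_eq_aeval_apply {K L W : Type*} [NontriviallyNormedField K]
    [Field L] [Algebra K L] [SeminormedAddCommGroup W] [NormedSpace K W] [Module L W]
    [IsScalarTower K L W] {N : Module.End L W} {T : W →L[K] W} (hT : ∀ w, T w = N w) (P : K[X])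
    (w : W) : aeval N (P.map (algebraMap K L)) w = aeval T P w := by
  rw [aeval_map_algebraMap]
  induction P using Polynomial.induction_on generalizing w with
  | C a => simp
  | add F G hF hG => simp only [map_add, LinearMap.add_apply, _root_.add_apply, hF, hG]
  | monomial n a h =>
    rw [pow_succ, ← mul_assoc, map_mul _ _ X, map_mul _ _ X, aeval_X, aeval_X,
      Module.End.mul_apply, h, ← hT]
    rfl

theorem continuous_of_finiteDimensional_of_normedAlgebra (K : Type*) {L W W' : Type*}
    [NontriviallyNormedField K] [NormedField L] [CompleteSpace L] [NormedAlgebra K L]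
    [NormedAddCommGroup W] [NormedSpace L W] [FiniteDimensional L W]
    [SeminormedAddCommGroup W'] [NormedSpace L W'] (f : W →ₗ[L] W') : Continuous f := by
  obtain ⟨a, ha⟩ := NontriviallyNormedField.non_trivial (α := K)
  let : NontriviallyNormedField L :=
    { ‹NormedField L› with non_trivial := ⟨algebraMap K L a, by rwa [norm_algebraMap']⟩ }
  exact f.continuous_of_finiteDimensional

end Operators

theorem stmt13_general (p : ℕ) [Fact p.Prime] (L : Type*) [NormedField L] [NormedAlgebra ℚ_[p] L]
    (W : Type*) [SeminormedAddCommGroup W] [NormedSpace L W]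
    (N : Module.End L W) (hN : Continuous N)
    (m : ℕ) (n₀ : ℕ) (hn₀ : 0 < n₀) (ξ : Fin n₀ → ℤ_[p])
    (hann : Polynomial.aeval N
      (∏ k : Fin n₀,
        (Polynomial.X - Polynomial.C (algebraMap ℚ_[p] L (ξ k : ℚ_[p]))) ^ m) = 0)
    (hNL : ∀ k : Fin n₀, IsPAdicNonLiouville (ξ ⟨0, hn₀⟩ - ξ k))
    (hNI : ∀ k : Fin n₀, ξ ⟨0, hn₀⟩ - ξ k = 0 ∨
      ∀ i : ℤ, ((ξ ⟨0, hn₀⟩ - ξ k : ℤ_[p]) : ℚ_[p]) ≠ (i : ℚ_[p]))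
    (Q : Polynomial ℚ_[p])
    (d b c e : ℝ) (hd : 0 < d) (hdb : d < b) (hbc : b ≤ c) (hce : c < e)
    (v : ℤ → W)
    (hQ : N (Polynomial.aeval N (Q.map (algebraMap ℚ_[p] L)) (v 0)) =
        algebraMap ℚ_[p] L (ξ ⟨0, hn₀⟩ : ℚ_[p]) •
          (Polynomial.aeval N (Q.map (algebraMap ℚ_[p] L)) (v 0)))
    (hv : ∃ B : ℝ, ∀ j : ℤ, ‖v j‖ * max (d ^ j) (e ^ j) ≤ B) :
    (∀ l : ℕ,
      Polynomial.aeval N (DjlPolyL p L n₀ hn₀ ξ m Q 0 l) (v 0) =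
        Polynomial.aeval N (Q.map (algebraMap ℚ_[p] L)) (v 0)) ∧
    (∀ ε : ℝ, 0 < ε → ∃ L₀ : ℕ, ∀ l : ℕ, L₀ ≤ l → ∀ j : ℤ, j ≠ 0 →
      ‖Polynomial.aeval N (DjlPolyL p L n₀ hn₀ ξ m Q j l) (v j)‖ * max (b ^ j) (c ^ j)
        ≤ ε) := by
  let : NormedSpace ℚ_[p] W := NormedSpace.restrictScalars ℚ_[p] L W
  have : IsScalarTower ℚ_[p] L W := RestrictScalars.isScalarTower ℚ_[p] L W
  let T : W →L[ℚ_[p]] W := ⟨N.restrictScalars ℚ_[p], hN⟩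
  have hT (P : ℚ_[p][X]) (w : W) : aeval N (P.map (algebraMap ℚ_[p] L)) w = aeval T P w :=
    aeval_map_algebraMap_apply_eq_aeval_apply (N := N) (T := T) (fun _ => rfl) P w
  have hannT : aeval T (∏ k, (X - C (ξ k : ℚ_[p])) ^ m) = 0 := by
    ext w
    rw [← hT, Polynomial.map_prod]
    simpa using LinearMap.congr_fun hann w
  have hQT : aeval T ((X - C (ξ ⟨0, hn₀⟩ : ℚ_[p])) * Q) (v 0) = 0 := by
    rw [← hT, Polynomial.map_mul, map_mul]
    simpa [-aeval_map_algebraMap, sub_eq_zero] using hQ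
  simp only [← fun j l => DjlPolyL_map_algebraMap hn₀ ξ m Q L j l, hT]
  refine ⟨aeval_DjlPolyL_zero_smul hn₀ ξ m Q T hNI hQT, fun ε hε => ?_⟩
  obtain ⟨B, hB⟩ := hv
  have hlim := SeminormedAddGroup.tendstoUniformlyOn_zero.1
    (tendstoUniformlyOn_norm_aeval_DjlPolyL_apply_mul hn₀ ξ m Q hannT hNL hd hdb hbc hce hB) ε hε
  obtain ⟨L₀, hL₀⟩ := eventually_atTop.1 hlim
  exact ⟨L₀, fun l hl j hj => (Real.le_norm_self _).trans (hL₀ l hl j hj).le⟩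

end

/-- **Analytic content of claims 1 and 2 in the proof of Lemma 3.4.1 (one variable).**
Over a complete nonarchimedean normed `ℚ_p`-algebra field `L`, let `W` be a
finite-dimensional nonarchimedean normed `L`-vector space and `N` an endomorphism with
`∏_k (N - ξ_k)^m = 0`, the differences `ξ_k - ξ_{k'} ∈ ℤ_p` being `p`-adically
non-Liouville and either `0` or not rational integers.  Let `Q ∈ ℚ_p[x]` with
`Q(N)(W) ⊆ ker (N - ξ_1)`, let `0 < d < b ≤ c < e < 1`, and let `(v_j)_{j∈ℤ}` satisfy
`sup_j ‖v_j‖ max(d^j, e^j) < ∞`.  Then `D_l^{(0)}(v_0) = Q(N)(v_0)` for every `l`, and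
`sup_{j≠0} ‖D_l^{(j)}(v_j)‖ max(b^j, c^j) → 0` as `l → ∞`. -/
theorem stmt13 (p : ℕ) [Fact p.Prime] (L : Type*) [NormedField L] [CompleteSpace L]
    [IsUltrametricDist L] [NormedAlgebra ℚ_[p] L]
    (W : Type*) [NormedAddCommGroup W] [NormedSpace L W] [IsUltrametricDist W]
    [FiniteDimensional L W]
    (N : Module.End L W)
    (m : ℕ) (hm : 1 ≤ m) (n₀ : ℕ) (hn₀ : 0 < n₀) (ξ : Fin n₀ → ℤ_[p])
    (hann : Polynomial.aeval N
      (∏ k : Fin n₀,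
        (Polynomial.X - Polynomial.C (algebraMap ℚ_[p] L (ξ k : ℚ_[p]))) ^ m) = 0)
    (hNL : ∀ k k' : Fin n₀, IsPAdicNonLiouville (ξ k - ξ k'))
    (hNI : ∀ k k' : Fin n₀, ξ k - ξ k' = 0 ∨
      ∀ i : ℤ, ((ξ k - ξ k' : ℤ_[p]) : ℚ_[p]) ≠ (i : ℚ_[p]))
    (Q : Polynomial ℚ_[p])
    (hQ : ∀ w : W,
      N (Polynomial.aeval N (Q.map (algebraMap ℚ_[p] L)) w) =
        algebraMap ℚ_[p] L (ξ ⟨0, hn₀⟩ : ℚ_[p]) •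
          (Polynomial.aeval N (Q.map (algebraMap ℚ_[p] L)) w))
    (d b c e : ℝ) (hd : 0 < d) (hdb : d < b) (hbc : b ≤ c) (hce : c < e) (he : e < 1)
    (v : ℤ → W)
    (hv : ∃ B : ℝ, ∀ j : ℤ, ‖v j‖ * max (d ^ j) (e ^ j) ≤ B) :
    (∀ l : ℕ,
      Polynomial.aeval N (DjlPolyL p L n₀ hn₀ ξ m Q 0 l) (v 0) =
        Polynomial.aeval N (Q.map (algebraMap ℚ_[p] L)) (v 0)) ∧
    (∀ ε : ℝ, 0 < ε → ∃ L₀ : ℕ, ∀ l : ℕ, L₀ ≤ l → ∀ j : ℤ, j ≠ 0 →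
      ‖Polynomial.aeval N (DjlPolyL p L n₀ hn₀ ξ m Q j l) (v j)‖ * max (b ^ j) (c ^ j)
        ≤ ε) :=
  stmt13_general p L W N (continuous_of_finiteDimensional_of_normedAlgebra ℚ_[p] N) m n₀ hn₀ ξ hann
    (hNL _) (hNI _) Q d b c e hd hdb hbc hce v (hQ _) hv
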